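/- arXiv:1511.04564 — 2 statements merged into one kernel-verified Lean document; each statement's English description precedes it below -/
import Mathlib

section
/- Let q = (q_1,…,q_d) ∈ ℕ^d satisfy gcd{q_1,…,q_d} = 1, let α ∈ ℝ^d and u ∈ {−1,1}^d, and suppose the Lissajous curve 𝔩^{(q)}_{α,u} is degenerate. For x ∈ ℝ^d let U(x) = {t ∈ [0,2π) : 𝔩^{(q)}_{α,u}(t) = x}. Then, with precisely two exceptional points x in the image 𝔩^{(q)}_{α,u}([0,2π)), every point x of the image satisfies #U(x) ≥ 2; only finitely many x satisfy #U(x) > 2, and for each such x the number #U(x) is even; moreover #U(x) ≤ 2^d for every x. -/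
/-!
After the parameter shift provided by degeneracy the curve is `t ↦ (u'_j cos (q_j t))_j`, so it
factors through a map on the circle `Real.Angle`. Two angles `θ`, `ψ` have the same image iff
`q_j θ = ± q_j ψ` for every `j`. Since the frequencies are coprime, `θ` is determined by the
angles `q_j θ` (`eq_of_forall_nsmul_eq`), so a fibre has at most one element for each of the `2^d`
sign patterns (`fibre_finite_ncard_le`).

Each fibre is stable under `θ ↦ -θ`, whose fixed points are `0` and `π`. These two angles are
alone in their fibres, and every other fibre has an even number of elements, positive if the
point lies on the image. Finally, if a fibre contains `θ ≠ ± ψ`, then two coordinates carry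
opposite signs, say `q_i θ = q_i ψ` and `q_j θ = - q_j ψ`, so that `2 q_i q_j ψ = 0`; only
finitely many `ψ` are torsion of such an order.
-/

open Real Set

/-- The Lissajous curve 𝔩^{(q)}_{α,u}(t) = (u_1 cos(q_1 t − α_1), …, u_d cos(q_d t − α_d)). -/
noncomputable def liss {d : ℕ} (q : Fin d → ℕ) (α u : Fin d → ℝ) (t : ℝ) : Fin d → ℝ :=
  fun j => u j * Real.cos ((q j : ℝ) * t - α j)

/-- The curve is degenerate if a parameter shift turns it into a curve with zero phases. -/
def IsDegenerate {d : ℕ} (q : Fin d → ℕ) (α u : Fin d → ℝ) : Prop :=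
  ∃ t' : ℝ, ∃ u' : Fin d → ℝ, (∀ j, u' j = 1 ∨ u' j = -1) ∧
    ∀ t : ℝ, liss q α u (t - t') = liss q 0 u' t

/-- The points of the circle that the zero-phase curve `θ ↦ (u_j cos (q_j θ))_j` maps to `x`. -/
def fibre {d : ℕ} (q : Fin d → ℕ) (u x : Fin d → ℝ) : Set Real.Angle :=
  {θ | ∀ j, u j * Real.Angle.cos (q j • θ) = x j}

theorem liss_zero_eq_iff {d : ℕ} (q : Fin d → ℕ) (u x : Fin d → ℝ) (t : ℝ) :
    liss q 0 u t = x ↔ (t : Real.Angle) ∈ fibre q u x := by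
  have h : ∀ j, Real.Angle.cos (q j • (t : Real.Angle)) = Real.cos (q j * t) := by
    intro j
    rw [← Real.Angle.natCast_mul_eq_nsmul, Real.Angle.cos_coe]
  simp [funext_iff, liss, fibre, h]

/-- Coprime frequencies separate points of the circle: the order of `θ - ψ` divides all `q j`. -/
theorem eq_of_forall_nsmul_eq {d : ℕ} {q : Fin d → ℕ} (hgcd : Finset.univ.gcd q = 1)
    {θ ψ : Real.Angle} (h : ∀ j, q j • θ = q j • ψ) : θ = ψ := by
  have h1 : addOrderOf (θ - ψ) ∣ Finset.univ.gcd q :=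
    Finset.dvd_gcd fun j _ => addOrderOf_dvd_of_nsmul_eq_zero (by rw [nsmul_sub, h j, sub_self])
  rw [hgcd, Nat.dvd_one, AddMonoid.addOrderOf_eq_one_iff] at h1
  exact sub_eq_zero.mp h1

theorem nsmul_eq_or_of_mem_fibre {d : ℕ} {q : Fin d → ℕ} {u x : Fin d → ℝ}
    (hu : ∀ j, u j = 1 ∨ u j = -1) {θ ψ : Real.Angle} (hθ : θ ∈ fibre q u x)
    (hψ : ψ ∈ fibre q u x) (j : Fin d) : q j • θ = q j • ψ ∨ q j • θ = -(q j • ψ) := by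
  have h0 : u j ≠ 0 := by rcases hu j with h | h <;> simp [h]
  exact Real.Angle.cos_eq_iff_eq_or_eq_neg.mp
    (mul_left_cancel₀ h0 ((hθ j).trans (hψ j).symm))

theorem neg_mem_fibre {d : ℕ} {q : Fin d → ℕ} {u x : Fin d → ℝ} {θ : Real.Angle}
    (hθ : θ ∈ fibre q u x) : -θ ∈ fibre q u x := by
  intro j
  rw [smul_neg, Real.Angle.cos_neg]
  exact hθ j

theorem fibre_finite_ncard_le {d : ℕ} {q : Fin d → ℕ} (hgcd : Finset.univ.gcd q = 1)
    {u : Fin d → ℝ} (hu : ∀ j, u j = 1 ∨ u j = -1) (x : Fin d → ℝ) :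
    (fibre q u x).Finite ∧ (fibre q u x).ncard ≤ 2 ^ d := by
  classical
  rcases (fibre q u x).eq_empty_or_nonempty with h | ⟨ψ, hψ⟩
  · simp [h]
  -- Relative to the base point `ψ`, each angle of the fibre is determined by its sign pattern.
  have hinj : Set.InjOn (fun (θ : Real.Angle) (j : Fin d) => decide (q j • θ = q j • ψ))
      (fibre q u x) := by
    intro θ hθ θ' hθ' h
    refine eq_of_forall_nsmul_eq hgcd fun j => ?_
    have hj := congrFun h j
    simp only [decide_eq_decide] at hj
    have h1 := nsmul_eq_or_of_mem_fibre hu hθ hψ j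
    have h2 := nsmul_eq_or_of_mem_fibre hu hθ' hψ j
    grind
  refine ⟨Set.Finite.of_finite_image (Set.toFinite _) hinj, ?_⟩
  rw [← hinj.ncard_image]
  refine (Set.ncard_le_card _).trans ?_
  simp

/-- An angle that equals its own negative is alone in its fibre. -/
theorem eq_of_mem_fibre_of_neg_eq {d : ℕ} {q : Fin d → ℕ} (hgcd : Finset.univ.gcd q = 1)
    {u x : Fin d → ℝ} (hu : ∀ j, u j = 1 ∨ u j = -1) {θ ψ : Real.Angle}
    (hθ : θ ∈ fibre q u x) (hψ : ψ ∈ fibre q u x) (hneg : -ψ = ψ) : θ = ψ := by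
  refine eq_of_forall_nsmul_eq hgcd fun j => ?_
  rcases nsmul_eq_or_of_mem_fibre hu hθ hψ j with h | h
  · exact h
  · rw [h, ← smul_neg, hneg]

/-- Without a fixed point of negation, the fibre splits into pairs `{θ, -θ}`. -/
theorem even_ncard_fibre {d : ℕ} {q : Fin d → ℕ} {u x : Fin d → ℝ}
    (hfin : (fibre q u x).Finite) (hne : ∀ θ ∈ fibre q u x, -θ ≠ θ) :
    Even (fibre q u x).ncard := by
  rw [Set.ncard_eq_toFinset_card _ hfin, ← ZMod.natCast_eq_zero_iff_even]
  have h : ∑ _θ ∈ hfin.toFinset, (1 : ZMod 2) = 0 :=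
    Finset.sum_involution (fun θ _ => -θ) (fun _ _ => by decide)
      (fun θ hθ _ => hne θ (hfin.mem_toFinset.mp hθ))
      (fun θ hθ => hfin.mem_toFinset.mpr (neg_mem_fibre (hfin.mem_toFinset.mp hθ)))
      (fun θ _ => neg_neg θ)
  simpa using h

/-- An angle with a third angle `θ ≠ ± ψ` in its fibre is a torsion point. -/
theorem exists_torsion_of_mem_fibre {d : ℕ} {q : Fin d → ℕ} (hgcd : Finset.univ.gcd q = 1)
    {u x : Fin d → ℝ} (hu : ∀ j, u j = 1 ∨ u j = -1) {θ ψ : Real.Angle}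
    (hθ : θ ∈ fibre q u x) (hψ : ψ ∈ fibre q u x) (h1 : θ ≠ ψ) (h2 : θ ≠ -ψ) :
    ∃ i j, (2 * (q i * q j)) • ψ = 0 := by
  obtain ⟨j, hj⟩ : ∃ j, q j • θ ≠ q j • ψ := by
    by_contra! h
    exact h1 (eq_of_forall_nsmul_eq hgcd h)
  obtain ⟨i, hi⟩ : ∃ i, q i • θ ≠ q i • -ψ := by
    by_contra! h
    exact h2 (eq_of_forall_nsmul_eq hgcd h)
  have hj' := (nsmul_eq_or_of_mem_fibre hu hθ hψ j).resolve_left hj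
  rw [smul_neg] at hi
  have hi' := (nsmul_eq_or_of_mem_fibre hu hθ hψ i).resolve_right hi
  refine ⟨i, j, ?_⟩
  have e1 : (q i * q j) • θ = (q i * q j) • ψ := by
    rw [mul_comm, mul_nsmul', hi', ← mul_nsmul']
  have e2 : (q i * q j) • θ = -((q i * q j) • ψ) := by
    rw [mul_nsmul', hj', smul_neg, ← mul_nsmul']
  rw [mul_nsmul', two_nsmul]
  nth_rewrite 1 [← e1]
  rw [e2, neg_add_cancel]

theorem finite_torsion_angle {n : ℕ} (hn : 0 < n) : {θ : Real.Angle | n • θ = 0}.Finite := by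
  have : Fact (0 < 2 * Real.pi) := ⟨Real.two_pi_pos⟩
  exact AddCircle.finite_torsion (2 * Real.pi) hn

/-- Theorem 1.1 b): for a degenerate Lissajous curve with gcd of the frequencies equal to 1,
up to precisely two exceptional points, every point of the image of `[0, 2π)` is hit at least
twice; only finitely many points are hit more than twice and for those the number of
parameters is even; every point is hit at most `2^d` times. -/
theorem stmt_1 {d : ℕ} (hd : 0 < d) (q : Fin d → ℕ) (hq : ∀ j, 0 < q j)
    (hgcd : Finset.univ.gcd q = 1)
    (α u : Fin d → ℝ) (hu : ∀ j, u j = 1 ∨ u j = -1)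
    (hdeg : IsDegenerate q α u)
    (U : (Fin d → ℝ) → Set ℝ)
    (hU : ∀ x, U x = {t ∈ Set.Ico (0 : ℝ) (2 * Real.pi) | liss q α u t = x}) :
    (∃ E : Set (Fin d → ℝ), E ⊆ liss q α u '' Set.Ico (0 : ℝ) (2 * Real.pi) ∧
      E.ncard = 2 ∧ E.Finite ∧
      ∀ x ∈ liss q α u '' Set.Ico (0 : ℝ) (2 * Real.pi), (2 ≤ (U x).ncard ↔ x ∉ E)) ∧
    {x : Fin d → ℝ | 2 < (U x).ncard}.Finite ∧
    (∀ x : Fin d → ℝ, 2 < (U x).ncard → Even (U x).ncard) ∧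
    ∀ x : Fin d → ℝ, (U x).Finite ∧ (U x).ncard ≤ 2 ^ d := by
  obtain ⟨t', v, hv, hshift⟩ := hdeg
  have hmem : ∀ x t, liss q α u t = x ↔ ((t + t' : ℝ) : Real.Angle) ∈ fibre q v x := by
    intro x t
    rw [← liss_zero_eq_iff, ← hshift, add_sub_cancel_right]
  have hinj : Set.InjOn (fun t : ℝ => ((t + t' : ℝ) : Real.Angle))
      (Set.Ico (0 : ℝ) (2 * Real.pi)) := by
    intro s hs t ht h
    simp only [Real.Angle.coe_add, add_left_inj] at h
    have : Fact (0 < 2 * Real.pi) := ⟨Real.two_pi_pos⟩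
    have ht' : t ∈ Set.Ico (0 : ℝ) (0 + 2 * Real.pi) := by simpa using ht
    have hs' : s ∈ Set.Ico (0 : ℝ) (0 + 2 * Real.pi) := by simpa using hs
    exact (AddCircle.coe_eq_coe_iff_of_mem_Ico hs' ht').mp h
  have hsurj : ∀ θ : Real.Angle, ∃ t ∈ Set.Ico (0 : ℝ) (2 * Real.pi),
      ((t + t' : ℝ) : Real.Angle) = θ := by
    intro θ
    induction θ using Real.Angle.induction_on with
    | _ s =>
      refine ⟨toIcoMod Real.two_pi_pos 0 (s - t'), ?_, ?_⟩
      · simpa using toIcoMod_mem_Ico Real.two_pi_pos 0 (s - t')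
      · rw [Real.Angle.coe_add, Real.Angle.coe_toIcoMod, ← Real.Angle.coe_add, sub_add_cancel]
  have himg : ∀ x, (fun t : ℝ => ((t + t' : ℝ) : Real.Angle)) '' U x = fibre q v x := by
    intro x
    ext θ
    constructor
    · rintro ⟨t, ht, rfl⟩
      rw [hU] at ht
      exact (hmem x t).mp ht.2
    · intro hθ
      obtain ⟨t, ht, rfl⟩ := hsurj θ
      exact ⟨t, by rw [hU]; exact ⟨ht, (hmem x t).mpr hθ⟩, rfl⟩
  have hinjU : ∀ x, Set.InjOn (fun t : ℝ => ((t + t' : ℝ) : Real.Angle)) (U x) :=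
    fun x => hinj.mono (by rw [hU]; exact fun t ht => ht.1)
  have hcard : ∀ x, (U x).ncard = (fibre q v x).ncard := fun x => by
    rw [← himg, (hinjU x).ncard_image]
  have hfin := fun x => fibre_finite_ncard_le hgcd hv x
  have hrange : ∀ x, x ∈ liss q α u '' Set.Ico (0 : ℝ) (2 * Real.pi) ↔
      (fibre q v x).Nonempty := by
    intro x
    constructor
    · rintro ⟨t, _, h⟩
      exact ⟨_, (hmem x t).mp h⟩
    · rintro ⟨θ, hθ⟩
      obtain ⟨t, ht, rfl⟩ := hsurj θ
      exact ⟨t, ht, (hmem x t).mpr hθ⟩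
  -- The image of an angle; the exceptional points are the images of `0` and `π`.
  let P : Real.Angle → Fin d → ℝ := fun θ j => v j * Real.Angle.cos (q j • θ)
  have hP : ∀ θ x, θ ∈ fibre q v x ↔ P θ = x := fun θ x => by
    simp only [fibre, P, funext_iff, Set.mem_setOf_eq]
  have hone : ∀ x θ, θ ∈ fibre q v x → -θ = θ → (fibre q v x).ncard = 1 := by
    intro x θ hθ hneg
    rw [Set.ncard_eq_one]
    exact ⟨θ, Set.eq_singleton_iff_unique_mem.mpr
      ⟨hθ, fun ψ hψ => eq_of_mem_fibre_of_neg_eq hgcd hv hψ hθ hneg⟩⟩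
  have hpine : P 0 ≠ P (Real.pi : Real.Angle) := by
    intro h
    exact Real.Angle.pi_ne_zero.symm (eq_of_mem_fibre_of_neg_eq hgcd hv
      ((hP 0 _).mpr h) ((hP _ _).mpr rfl) Real.Angle.neg_coe_pi)
  refine ⟨⟨{P 0, P (Real.pi : Real.Angle)}, ?_, Set.ncard_pair hpine, Set.toFinite _, ?_⟩,
    ?_, ?_, ?_⟩
  · rintro x (rfl | rfl)
    · exact (hrange _).mpr ⟨0, (hP _ _).mpr rfl⟩
    · exact (hrange _).mpr ⟨_, (hP _ _).mpr rfl⟩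
  · intro x hx
    rw [hrange] at hx
    rw [hcard]
    constructor
    · rintro h2 (h | h)
      · have := hone x 0 ((hP _ _).mpr h.symm) neg_zero
        omega
      · have := hone x _ ((hP _ _).mpr h.symm) Real.Angle.neg_coe_pi
        omega
    · intro hE
      have hev : Even (fibre q v x).ncard := by
        refine even_ncard_fibre (hfin x).1 fun θ hθ hneg => hE ?_
        rw [hP] at hθ
        rcases Real.Angle.neg_eq_self_iff.mp hneg with h | h
        · left; rw [← hθ, h]
        · right; rw [← hθ, h]; rfl
      have hpos := (Set.ncard_pos (hfin x).1).mpr hx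
      obtain ⟨k, hk⟩ := hev
      omega
  · have hT : (⋃ i, ⋃ j, {θ : Real.Angle | (2 * (q i * q j)) • θ = 0}).Finite :=
      Set.finite_iUnion fun i => Set.finite_iUnion fun j =>
        finite_torsion_angle (Nat.mul_pos two_pos (Nat.mul_pos (hq i) (hq j)))
    refine (hT.image P).subset fun x hx => ?_
    rw [Set.mem_setOf_eq, hcard] at hx
    obtain ⟨ψ, hψ⟩ : (fibre q v x).Nonempty :=
      Set.nonempty_of_ncard_ne_zero (by omega)
    obtain ⟨θ, hθ, hθ'⟩ : ∃ θ ∈ fibre q v x, θ ∉ ({ψ, -ψ} : Set Real.Angle) :=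
      Set.exists_mem_notMem_of_ncard_lt_ncard (((Set.ncard_insert_le _ _).trans (by simp)).trans_lt hx)
    simp only [Set.mem_insert_iff, Set.mem_singleton_iff, not_or] at hθ'
    obtain ⟨i, j, hij⟩ := exists_torsion_of_mem_fibre hgcd hv hθ hψ hθ'.1 hθ'.2
    exact ⟨ψ, Set.mem_iUnion₂.mpr ⟨i, j, hij⟩, (hP _ _).mp hψ⟩
  · intro x hx
    rw [hcard] at hx ⊢
    refine even_ncard_fibre (hfin x).1 fun θ hθ hneg => ?_
    have := hone x θ hθ hneg
    omega
  · intro x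
    refine ⟨Set.Finite.of_finite_image ?_ (hinjU x), (hcard x).trans_le (hfin x).2⟩
    rw [himg]
    exact (hfin x).1
end

section
/- Let n ∈ ℕ^d have pairwise relatively prime entries. For r ∈ {0,1}, LC^{(n)}_r = { ℓ^{(n)}_{0,1}(t^{(n)}_l) : l ∈ {0,…,p[n]} with l ≡ r (mod 2) }. In particular, LC^{(n)} = { ℓ^{(n)}_{0,1}(t^{(n)}_l) : l ∈ {0,…,p[n]} }. -/
/-!
At the sampling points the curve has coordinates `cos (l π / n j)` (`lc1_tn`), which depend only on
the class of `l` modulo `2 * n j` up to sign. Hence reducing `l` modulo `2 * n j` and reflecting the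
result into `{0, …, n j}` gives an index `i j` of the same parity (`exists_fold`).

Conversely, let `i` be an index with all entries of parity `r`, and write `i j = r + 2 * k j`. The
Chinese remainder theorem, applied to the coprime moduli `n j` rather than the never coprime
`2 * n j`, gives `m < p[n]` with `m ≡ k j` modulo `n j`. Then `l = r + 2 * m < 2 * p[n]` is
congruent to `i j` modulo `2 * n j`, and if `l > p[n]` it may be replaced by its reflection
`2 * p[n] - l`, which has the same parity and the same cosines.
-/

open Real Set

/-- p[n] = ∏_{j=1}^d n_j. -/
def Pp {d : ℕ} (n : Fin d → ℕ) : ℕ := ∏ j, n j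

/-- p_i[n] = ∏_{j ≠ i} n_j. -/
def Pc {d : ℕ} (n : Fin d → ℕ) (i : Fin d) : ℕ := ∏ j ∈ Finset.univ.erase i, n j

/-- t^{(n)}_l = lπ/p[n]. -/
noncomputable def tn {d : ℕ} (n : Fin d → ℕ) (l : ℤ) : ℝ := (l : ℝ) * Real.pi / (Pp n : ℝ)

/-- t^{(2n)}_l = lπ/(2p[n]). -/
noncomputable def t2n {d : ℕ} (n : Fin d → ℕ) (l : ℤ) : ℝ :=
  (l : ℝ) * Real.pi / (2 * (Pp n : ℝ))

/-- The Lissajous curve ℓ^{(2n)}_{κ,u}. -/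
noncomputable def lc2 {d : ℕ} (n : Fin d → ℕ) (κ : Fin d → ℤ) (u : Fin d → ℝ) (t : ℝ) :
    Fin d → ℝ :=
  fun j => u j * Real.cos ((Pc n j : ℝ) * t - (κ j : ℝ) * Real.pi / (2 * (n j : ℝ)))

/-- The Lissajous curve ℓ^{(n)}_{κ,u}. -/
noncomputable def lc1 {d : ℕ} (n : Fin d → ℕ) (κ : Fin d → ℤ) (u : Fin d → ℝ) (t : ℝ) :
    Fin d → ℝ :=
  fun j => u j * Real.cos ((Pc n j : ℝ) * t - (κ j : ℝ) * Real.pi / (n j : ℝ))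

/-- The index class I^{(n)}_r: 0 ≤ i_j ≤ n_j with i_j ≡ r (mod 2). -/
def IsetR {d : ℕ} (n : Fin d → ℕ) (r : ℕ) : Set (Fin d → ℕ) :=
  {i | ∀ j, i j ≤ n j ∧ i j % 2 = r % 2}

/-- The index set I^{(n)} = I^{(n)}_0 ∪ I^{(n)}_1. -/
def Iset {d : ℕ} (n : Fin d → ℕ) : Set (Fin d → ℕ) := IsetR n 0 ∪ IsetR n 1

/-- The subclass I^{(n)}_{M,r}: indices in I^{(n)}_r with 0 < i_j < n_j exactly for j ∈ M. -/
def IsetMR {d : ℕ} (n : Fin d → ℕ) (M : Finset (Fin d)) (r : ℕ) : Set (Fin d → ℕ) :=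
  {i ∈ IsetR n r | ∀ j, (0 < i j ∧ i j < n j) ↔ j ∈ M}

/-- I^{(n)}_M = I^{(n)}_{M,0} ∪ I^{(n)}_{M,1}. -/
def IsetM {d : ℕ} (n : Fin d → ℕ) (M : Finset (Fin d)) : Set (Fin d → ℕ) :=
  IsetMR n M 0 ∪ IsetMR n M 1

/-- Chebyshev–Gauß–Lobatto point z^{(m)}_i = cos(iπ/m). -/
noncomputable def zpt (m i : ℕ) : ℝ := Real.cos ((i : ℝ) * Real.pi / (m : ℝ))

/-- The multivariate point z^{(n)}_i. -/
noncomputable def zv {d : ℕ} (n : Fin d → ℕ) (i : Fin d → ℕ) : Fin d → ℝ :=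
  fun j => zpt (n j) (i j)

/-- The Lissajous–Chebyshev node class LC^{(n)}_r = {z^{(n)}_i : i ∈ I^{(n)}_r}. -/
noncomputable def LCsetR {d : ℕ} (n : Fin d → ℕ) (r : ℕ) : Set (Fin d → ℝ) :=
  {x | ∃ i ∈ IsetR n r, x = zv n i}

/-- LC^{(n)} = LC^{(n)}_0 ∪ LC^{(n)}_1. -/
noncomputable def LCset {d : ℕ} (n : Fin d → ℕ) : Set (Fin d → ℝ) :=
  LCsetR n 0 ∪ LCsetR n 1

/-- Shifting `a` by a multiple of `2 * m` does not change `cos (a π / m)`. -/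
lemma cos_shift {m : ℕ} (hm : 0 < m) (a b k : ℤ) (h : a = b + 2 * m * k) :
    Real.cos ((a : ℝ) * Real.pi / m) = Real.cos ((b : ℝ) * Real.pi / m) := by
  have hm' : (m : ℝ) ≠ 0 := by positivity
  have : (a : ℝ) * Real.pi / m = (b : ℝ) * Real.pi / m + k * (2 * Real.pi) := by
    subst h
    push_cast
    field_simp
  rw [this, Real.cos_add_int_mul_two_pi]

lemma cos_reflect {m : ℕ} (hm : 0 < m) (a b k : ℤ) (h : a = -b + 2 * m * k) :
    Real.cos ((a : ℝ) * Real.pi / m) = Real.cos ((b : ℝ) * Real.pi / m) := by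
  rw [cos_shift hm a (-b) k h, ← Real.cos_neg]
  congr 1
  push_cast
  ring

lemma Pc_mul {d : ℕ} (n : Fin d → ℕ) (j : Fin d) : n j * Pc n j = Pp n :=
  Finset.mul_prod_erase Finset.univ n (Finset.mem_univ j)

lemma lc1_tn {d : ℕ} (n : Fin d → ℕ) (hn : ∀ j, 0 < n j) (l : ℕ) (j : Fin d) :
    lc1 n 0 (fun _ => 1) (tn n l) j = Real.cos ((l : ℝ) * Real.pi / (n j : ℝ)) := by
  have h1 : (n j : ℝ) ≠ 0 := by exact_mod_cast (hn j).ne'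
  have h2 : (Pc n j : ℝ) ≠ 0 := by
    exact_mod_cast (Finset.prod_pos fun i _ => hn i).ne'
  simp only [lc1, tn, one_mul, ← Pc_mul n j]
  congr 1
  push_cast
  field_simp
  simp

/-- Every `l` folds, modulo `2 * m` and up to sign, to an index in `{0, …, m}` of the same
parity. -/
lemma exists_fold {m : ℕ} (hm : 0 < m) (l : ℕ) :
    ∃ i, i ≤ m ∧ i % 2 = l % 2 ∧ Real.cos ((l : ℝ) * Real.pi / m) = zpt m i := by
  have hlt : l % (2 * m) < 2 * m := Nat.mod_lt _ (by omega)
  have hdiv := Nat.mod_add_div l (2 * m)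
  rw [mul_assoc] at hdiv
  by_cases h : l % (2 * m) ≤ m
  · refine ⟨l % (2 * m), h, by omega, ?_⟩
    have := cos_shift hm l (l % (2 * m) : ℕ) (l / (2 * m) : ℕ) (by
      rw [mul_assoc]; exact_mod_cast hdiv.symm)
    rw [zpt]
    rwa [Int.cast_natCast, Int.cast_natCast] at this
  · refine ⟨2 * m - l % (2 * m), by omega, by omega, ?_⟩
    have := cos_reflect hm l (2 * m - l % (2 * m) : ℕ) ((l / (2 * m) : ℕ) + 1) (by
      rw [Nat.cast_sub hlt.le]
      have h' : ((l % (2 * m) : ℕ) : ℤ) + 2 * (m * (l / (2 * m) : ℕ)) = l := by exact_mod_cast hdiv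
      rw [← h']
      push_cast
      ring)
    exact_mod_cast this

/-- Chinese remainder step: an index of constant parity `r` is hit, up to sign and modulo
`2 * n j`, by one `l ≤ p[n]` of that parity. -/
lemma exists_param {d : ℕ} (n : Fin d → ℕ) (hn : ∀ j, 0 < n j)
    (hcop : ∀ i j, i ≠ j → Nat.Coprime (n i) (n j)) {r : ℕ} (hr : r ≤ 1) {i : Fin d → ℕ}
    (hi : i ∈ IsetR n r) :
    ∃ l : ℕ, l ≤ Pp n ∧ l % 2 = r ∧
      ∀ j, zpt (n j) (i j) = Real.cos ((l : ℝ) * Real.pi / (n j : ℝ)) := by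
  have hs : ∀ j ∈ (Finset.univ : Finset (Fin d)), n j ≠ 0 := fun j _ => (hn j).ne'
  have hp : Set.Pairwise (↑(Finset.univ : Finset (Fin d))) (Function.onFun Nat.Coprime n) :=
    fun a _ b _ h => hcop a b h
  obtain ⟨m, hm, hlt⟩ : ∃ m : ℕ, (∀ j, m ≡ i j / 2 [MOD n j]) ∧ m < Pp n :=
    ⟨_, fun j => (Nat.chineseRemainderOfFinset (fun j => i j / 2) n Finset.univ hs hp).2 j
      (Finset.mem_univ j), Nat.chineseRemainderOfFinset_lt_prod _ _ hs hp⟩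
  have hk : ∀ j, ∃ k : ℤ, (i j : ℤ) = ((r + 2 * m : ℕ) : ℤ) + 2 * n j * k := by
    intro j
    obtain ⟨k, hk⟩ := (hm j).dvd
    refine ⟨k, ?_⟩
    have := (hi j).2
    have h2 : (i j : ℤ) = r + 2 * (i j / 2 : ℕ) := by omega
    push_cast at h2 hk ⊢
    rw [mul_assoc, ← hk]
    linarith
  by_cases h : r + 2 * m ≤ Pp n
  · refine ⟨r + 2 * m, h, by omega, fun j => ?_⟩
    obtain ⟨k, hk⟩ := hk j
    have := cos_shift (hn j) _ _ k hk
    exact_mod_cast this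
  · refine ⟨2 * Pp n - (r + 2 * m), by omega, by omega, fun j => ?_⟩
    obtain ⟨k, hk⟩ := hk j
    have := cos_reflect (hn j) (i j) (2 * Pp n - (r + 2 * m) : ℕ) (k + Pc n j) (by
      rw [hk, Nat.cast_sub (by omega), ← Pc_mul n j]
      push_cast
      ring)
    exact_mod_cast this

lemma LCsetR_eq {d : ℕ} (n : Fin d → ℕ) (hn : ∀ j, 0 < n j)
    (hcop : ∀ i j, i ≠ j → Nat.Coprime (n i) (n j)) (r : ℕ) (hr : r ≤ 1) :
    LCsetR n r =
      {x | ∃ l : ℕ, l ≤ Pp n ∧ l % 2 = r ∧ x = lc1 n 0 (fun _ => 1) (tn n l)} := by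
  ext x
  constructor
  · rintro ⟨i, hi, rfl⟩
    obtain ⟨l, hl, hlr, h⟩ := exists_param n hn hcop hr hi
    exact ⟨l, hl, hlr, funext fun j => (h j).trans (lc1_tn n hn l j).symm⟩
  · rintro ⟨l, -, hlr, rfl⟩
    choose i hi hi2 h using fun j => exists_fold (hn j) l
    exact ⟨i, fun j => ⟨hi j, by have := hi2 j; omega⟩,
      funext fun j => (lc1_tn n hn l j).trans (h j)⟩

/-- Theorem 2.2: LC^{(n)}_r consists exactly of the points ℓ^{(n)}_{0,1}(t^{(n)}_l) with
0 ≤ l ≤ p[n] and l ≡ r (mod 2); in particular LC^{(n)} is the set of all points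
ℓ^{(n)}_{0,1}(t^{(n)}_l), 0 ≤ l ≤ p[n]. -/
theorem stmt_7 {d : ℕ} (hd : 0 < d) (n : Fin d → ℕ) (hn : ∀ j, 0 < n j)
    (hcop : ∀ i j, i ≠ j → Nat.Coprime (n i) (n j)) :
    (∀ r : ℕ, r ≤ 1 →
      LCsetR n r =
        {x | ∃ l : ℕ, l ≤ Pp n ∧ l % 2 = r ∧ x = lc1 n 0 (fun _ => 1) (tn n l)}) ∧
    LCset n = {x | ∃ l : ℕ, l ≤ Pp n ∧ x = lc1 n 0 (fun _ => 1) (tn n l)} := by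
  refine ⟨LCsetR_eq n hn hcop, ?_⟩
  rw [LCset, LCsetR_eq n hn hcop 0 (by omega), LCsetR_eq n hn hcop 1 le_rfl]
  ext x
  constructor
  · rintro (⟨l, hl, -, hx⟩ | ⟨l, hl, -, hx⟩) <;> exact ⟨l, hl, hx⟩
  · rintro ⟨l, hl, hx⟩
    rcases Nat.mod_two_eq_zero_or_one l with h | h
    · exact Or.inl ⟨l, hl, h, hx⟩
    · exact Or.inr ⟨l, hl, h, hx⟩
end
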